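/- arXiv:2303.09017 — 2 statements merged into one kernel-verified Lean document; each statement's English description precedes it below -/
import Mathlib

section
/- Let Y be a finite nonempty set and (J y)_{y∈Y} finite nonempty sets, let U ⊆ E be a linear subspace, and let (V z)_{z ∈ Z} be a finite family of linear subspaces of E with CCPD(V z) ⊆ CCPD(U) for every z ∈ Z. If u ∈ CCPD(U) and (v z)_{z∈Z} is a family with v z ∈ QNCCPD(V z) for each z and ∑_{z∈Z} v z ≤ u componentwise, then u − ∑_{z∈Z} v z ∈ QNCCPD(U). -/
/-- The set of conditional probability distributions on the disjoint union `Σ y, J y`. -/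
def condDist (Y : Type) [Fintype Y] (J : Y → Type) [∀ y, Fintype (J y)] :
    Set ((Σ y : Y, J y) → ℝ) :=
  {x | (∀ p : Σ y : Y, J y, 0 ≤ x p) ∧ ∀ y : Y, ∑ j : J y, x ⟨y, j⟩ = 1}

/-- The set of quasi-normalised vectors: components in `[0,1]` and all row sums equal. -/
def quasiNorm (Y : Type) [Fintype Y] (J : Y → Type) [∀ y, Fintype (J y)] :
    Set ((Σ y : Y, J y) → ℝ) :=
  {x | (∀ p : Σ y : Y, J y, 0 ≤ x p ∧ x p ≤ 1) ∧
    ∀ y y' : Y, ∑ j : J y, x ⟨y, j⟩ = ∑ j : J y', x ⟨y', j⟩}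

/-! Rescaling a nonzero vector of `V z` with nonnegative entries and equal row sums makes it a
conditional probability distribution, so the inclusion of polytopes puts the vector itself into the
subspace `U`. The difference then stays in `U` and keeps equal row sums by linearity, and its
entries lie in `[0, 1]` because `0 ≤ ∑ z, v z ≤ u`. -/

section

variable {Y : Type} {J : Y → Type} [∀ y, Fintype (J y)]

variable (Y J) in
/-- The vectors whose row sums are all equal: the linear part of quasi-normalisation, stated without
the bounds on the entries so that it is closed under the vector space operations. -/
def equalRowSums : Submodule ℝ ((Σ y : Y, J y) → ℝ) where
  carrier := {x | ∀ y y' : Y, ∑ j : J y, x ⟨y, j⟩ = ∑ j : J y', x ⟨y', j⟩}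
  zero_mem' y y' := by simp
  add_mem' {x x'} hx hx' y y' := by
    simp only [Pi.add_apply, Finset.sum_add_distrib, hx y y', hx' y y']
  smul_mem' c x hx y y' := by
    simp only [Pi.smul_apply, ← Finset.smul_sum, hx y y']

variable [Fintype Y] {u w x : (Σ y : Y, J y) → ℝ}

theorem mem_quasiNorm_iff :
    x ∈ quasiNorm Y J ↔ 0 ≤ x ∧ x ≤ 1 ∧ x ∈ equalRowSums Y J := by
  rw [← and_assoc]
  exact and_congr_left fun _ => forall_and

theorem condDist_subset_quasiNorm : condDist Y J ⊆ quasiNorm Y J := by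
  rintro x ⟨hx0, hx1⟩
  refine mem_quasiNorm_iff.2 ⟨hx0, fun ⟨y, j⟩ => ?_, fun y y' => (hx1 y).trans (hx1 y').symm⟩
  calc
    x ⟨y, j⟩ ≤ ∑ i : J y, x ⟨y, i⟩ :=
      Finset.single_le_sum (f := fun i => x ⟨y, i⟩) (fun i _ => hx0 ⟨y, i⟩) (Finset.mem_univ j)
    _ = 1 := hx1 y

theorem exists_pos_smul_mem_condDist (hx : 0 < x) (hrow : x ∈ equalRowSums Y J) :
    ∃ c : ℝ, 0 < c ∧ c • x ∈ condDist Y J := by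
  obtain ⟨hx0, ⟨y₀, j₀⟩, hpos⟩ := Pi.lt_def.1 hx
  have hsum : 0 < ∑ j : J y₀, x ⟨y₀, j⟩ :=
    Finset.sum_pos' (fun j _ => hx0 ⟨y₀, j⟩) ⟨j₀, Finset.mem_univ j₀, hpos⟩
  refine ⟨(∑ j : J y₀, x ⟨y₀, j⟩)⁻¹, inv_pos.2 hsum,
    smul_nonneg (inv_pos.2 hsum).le hx0, fun y => ?_⟩
  simp only [Pi.smul_apply, smul_eq_mul, ← Finset.mul_sum, hrow y y₀, inv_mul_cancel₀ hsum.ne']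

theorem mem_of_inter_condDist_subset {U : Submodule ℝ ((Σ y : Y, J y) → ℝ)}
    {C : Set ((Σ y : Y, J y) → ℝ)} (hC : ∀ ⦃c : ℝ⦄, 0 < c → ∀ ⦃x⦄, x ∈ C → c • x ∈ C)
    (hCU : C ∩ condDist Y J ⊆ U) (hxC : x ∈ C) (hx : 0 ≤ x) (hrow : x ∈ equalRowSums Y J) :
    x ∈ U := by
  obtain rfl | hpos := hx.eq_or_lt
  · exact U.zero_mem
  · obtain ⟨c, hc, hcx⟩ := exists_pos_smul_mem_condDist hpos hrow
    exact (U.smul_mem_iff hc.ne').1 (hCU ⟨hC hc hxC, hcx⟩)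

theorem sub_mem_quasiNorm (hu : u ∈ quasiNorm Y J) (hw : 0 ≤ w) (hrow : w ∈ equalRowSums Y J)
    (hwu : w ≤ u) : u - w ∈ quasiNorm Y J := by
  obtain ⟨_, hu1, hurow⟩ := mem_quasiNorm_iff.1 hu
  exact mem_quasiNorm_iff.2
    ⟨sub_nonneg.2 hwu, (sub_le_self u hw).trans hu1, sub_mem hurow hrow⟩

theorem difference_in_super_polytope_decomposition_general {Z : Type*} [Fintype Z]
    {U : Submodule ℝ ((Σ y : Y, J y) → ℝ)} {C : Z → Set ((Σ y : Y, J y) → ℝ)}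
    (hC : ∀ z, ∀ ⦃c : ℝ⦄, 0 < c → ∀ ⦃x⦄, x ∈ C z → c • x ∈ C z)
    (hCU : ∀ z, C z ∩ condDist Y J ⊆ U)
    (hu : u ∈ (U : Set ((Σ y : Y, J y) → ℝ)) ∩ quasiNorm Y J)
    {v : Z → (Σ y : Y, J y) → ℝ} (hv : ∀ z, v z ∈ C z ∩ quasiNorm Y J)
    (hle : ∑ z, v z ≤ u) :
    u - ∑ z, v z ∈ (U : Set ((Σ y : Y, J y) → ℝ)) ∩ quasiNorm Y J := by
  have hv0 (z : Z) : 0 ≤ v z := (mem_quasiNorm_iff.1 (hv z).2).1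
  have hrow (z : Z) : v z ∈ equalRowSums Y J := (mem_quasiNorm_iff.1 (hv z).2).2.2
  have hvU (z : Z) : v z ∈ U :=
    mem_of_inter_condDist_subset (hC z) (hCU z) (hv z).1 (hv0 z) (hrow z)
  exact ⟨sub_mem hu.1 (sum_mem fun z _ => hvU z),
    sub_mem_quasiNorm hu.2 (Finset.sum_nonneg fun z _ => hv0 z) (sum_mem fun z _ => hrow z) hle⟩

end

/-- If `(V z)_{z ∈ Z}` is a finite family of subspaces with
`CCPD(V z) ⊆ CCPD(U)`, `u ∈ CCPD(U)` and `(v z)` is a family with `v z ∈ QNCCPD(V z)`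
and `∑ z, v z ≤ u` componentwise, then `u - ∑ z, v z ∈ QNCCPD(U)`. -/
theorem difference_in_super_polytope_decomposition
    (Y : Type) [Fintype Y] [Nonempty Y]
    (J : Y → Type) [∀ y, Fintype (J y)] [∀ y, Nonempty (J y)]
    (Z : Type) [Fintype Z]
    (U : Submodule ℝ ((Σ y : Y, J y) → ℝ))
    (V : Z → Submodule ℝ ((Σ y : Y, J y) → ℝ))
    (hVU : ∀ z : Z, (V z : Set ((Σ y : Y, J y) → ℝ)) ∩ condDist Y J
        ⊆ (U : Set ((Σ y : Y, J y) → ℝ)) ∩ condDist Y J)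
    (u : (Σ y : Y, J y) → ℝ)
    (hu : u ∈ (U : Set ((Σ y : Y, J y) → ℝ)) ∩ condDist Y J)
    (v : Z → (Σ y : Y, J y) → ℝ)
    (hv : ∀ z : Z, v z ∈ (V z : Set ((Σ y : Y, J y) → ℝ)) ∩ quasiNorm Y J)
    (hle : ∑ z : Z, v z ≤ u) :
    u - ∑ z : Z, v z ∈ (U : Set ((Σ y : Y, J y) → ℝ)) ∩ quasiNorm Y J := by
  exact difference_in_super_polytope_decomposition_general
    (fun z _ _ _ hx => (V z).smul_mem _ hx) (fun z _ hx => (hVU z hx).1)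
    ⟨hu.1, condDist_subset_quasiNorm hu.2⟩ hv hle
end

section
/- The causaltope of the total causal order A ≺ B ≺ C on three parties with binary inputs and binary outputs — the set of three-party empirical models p : ({0,1}³) → ({0,1}³ → ℝ) satisfying (i) ∑_{o_B,o_C} p i o depends only on i_A (for each o_A) and (ii) ∑_{o_C} p i o depends only on (i_A, i_B) (for each (o_A,o_B)) — has affine dimension 42. -/
/-!
The uniform model lies in the interior of the nonnegative orthant, so the affine dimension is that
of the affine subspace cut out by the linear constraints alone. The direction of that subspace is
built one party at a time: given the space `W` of admissible functions of the past, the next party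
contributes the functions whose marginal over the new output lies in `W` and is independent of the
new input. Marginalisation is surjective, so by rank-nullity this step adds
`|past| * |input| * (|output| - 1)` to the dimension. In the binary case `42 = 2 + 8 + 32`.
-/

/-- The causaltope of the total causal order `A ≺ B ≺ C` on three parties with binary
inputs and binary outputs: empirical models `p` (nonnegative, normalised) such that
(i) the marginal of `o_A` depends only on `i_A`, and (ii) the joint marginal of
`(o_A, o_B)` depends only on `(i_A, i_B)`. -/
def causaltopeABC : Set ((Bool × Bool × Bool) → (Bool × Bool × Bool) → ℝ) :=
  {p | (∀ i o, 0 ≤ p i o) ∧ (∀ i, ∑ o : Bool × Bool × Bool, p i o = 1) ∧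
    (∀ a b c b' c' oA : Bool,
      ∑ oB : Bool, ∑ oC : Bool, p (a, b, c) (oA, oB, oC)
        = ∑ oB : Bool, ∑ oC : Bool, p (a, b', c') (oA, oB, oC)) ∧
    (∀ a b c c' oA oB : Bool,
      ∑ oC : Bool, p (a, b, c) (oA, oB, oC)
        = ∑ oC : Bool, p (a, b, c') (oA, oB, oC))}

section AffineDimension

variable {k V P : Type*} [NontriviallyNormedField k] [AddCommGroup V] [Module k V]
  [TopologicalSpace V] [ContinuousSMul k V] [TopologicalSpace P] [AddTorsor V P]
  [IsTopologicalAddTorsor P]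

theorem exists_ne_zero_smul_vadd_mem_of_mem_nhds {x : P} {s : Set P} (hs : s ∈ nhds x) (v : V) :
    ∃ ε : k, ε ≠ 0 ∧ ε • v +ᵥ x ∈ s := by
  have hcont : Filter.Tendsto (fun ε : k ↦ ε • v +ᵥ x) (nhds 0) (nhds x) := by
    have : Continuous fun ε : k ↦ ε • v +ᵥ x := by fun_prop
    simpa using this.tendsto 0
  have hmem : ∀ᶠ ε in nhdsWithin (0 : k) {0}ᶜ, ε • v +ᵥ x ∈ s :=
    (hcont.mono_left nhdsWithin_le_nhds).eventually_mem hs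
  exact (eventually_mem_nhdsWithin.and hmem).exists

theorem vectorSpan_inter_of_mem_nhds {A : AffineSubspace k P} {x : P} (hx : x ∈ A)
    {s : Set P} (hs : s ∈ nhds x) : vectorSpan k (s ∩ A) = A.direction := by
  apply le_antisymm
  · exact vectorSpan_mono k Set.inter_subset_right
  · intro v hv
    obtain ⟨ε, hε, hεs⟩ := exists_ne_zero_smul_vadd_mem_of_mem_nhds (k := k) hs v
    have hεA : ε • v +ᵥ x ∈ A :=
      AffineSubspace.vadd_mem_of_mem_direction (A.direction.smul_mem ε hv) hx
    have hdiff := vsub_mem_vectorSpan k (s := s ∩ A) ⟨hεs, hεA⟩ ⟨mem_of_mem_nhds hs, hx⟩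
    rwa [vadd_vsub, Submodule.smul_mem_iff _ hε] at hdiff

end AffineDimension

section Extension

variable {K : Type*} [DivisionRing K]

theorem finrank_comap_of_surjective {V W : Type*} [AddCommGroup V] [Module K V]
    [FiniteDimensional K V] [AddCommGroup W] [Module K W] {f : V →ₗ[K] W}
    (hf : Function.Surjective f) (S : Submodule K W) :
    Module.finrank K (S.comap f) = Module.finrank K S + Module.finrank K (LinearMap.ker f) := by
  have hrange : LinearMap.range (f.domRestrict (S.comap f)) = S := by
    rw [LinearMap.range_domRestrict, Submodule.map_comap_eq_of_surjective hf]
  have hker : (LinearMap.ker (f.domRestrict (S.comap f))).map (S.comap f).subtype =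
      LinearMap.ker f := by
    rw [LinearMap.ker_domRestrict, Submodule.map_comap_subtype, inf_eq_right]
    exact LinearMap.ker_le_comap f
  rw [← (f.domRestrict (S.comap f)).finrank_range_add_finrank_ker, hrange, ← hker,
    Submodule.finrank_map_subtype_eq]

variable (K) in
/-- Summation over the last coordinate: the marginal of a family of signed measures on `O`
indexed by `Q`, namely the total mass of each member. -/
def outputMarginal (Q O : Type*) [Fintype O] : (Q × O → K) →ₗ[K] (Q → K) where
  toFun d q := ∑ o, d (q, o)
  map_add' _ _ := funext fun _ ↦ Finset.sum_add_distrib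
  map_smul' _ _ := by
    ext q
    simp [Finset.mul_sum]

variable {P Q : Type*} (I O : Type*) [Fintype O]

theorem outputMarginal_apply (d : Q × O → K) (q : Q) :
    outputMarginal K Q O d q = ∑ o, d (q, o) := rfl

theorem outputMarginal_surjective [Nonempty O] :
    Function.Surjective (outputMarginal K Q O) := by
  classical
  let o₀ := Classical.arbitrary O
  intro f
  refine ⟨fun x ↦ Pi.single (M := fun _ ↦ K) o₀ (f x.1) x.2, funext fun q ↦ ?_⟩
  simp [outputMarginal_apply]

theorem finrank_ker_outputMarginal [Fintype Q] [Nonempty O] :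
    Module.finrank K (LinearMap.ker (outputMarginal K Q O)) =
      Fintype.card Q * (Fintype.card O - 1) := by
  have hrank := (outputMarginal K Q O).finrank_range_add_finrank_ker
  rw [LinearMap.range_eq_top.2 (outputMarginal_surjective O), finrank_top,
    Module.finrank_fintype_fun_eq_card, Module.finrank_fintype_fun_eq_card,
    Fintype.card_prod] at hrank
  rw [Nat.mul_sub_one]
  omega

/-- The functions of a past `P`, an input `I` and an output `O` whose marginal over `O` does not
depend on the input and, as a function of the past, lies in `W`. This is how a space of
no-signalling functions grows when a party is appended at the end of the causal order. -/
def causalExtension (W : Submodule K (P → K)) : Submodule K ((P × I) × O → K) :=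
  (W.map (LinearMap.funLeft K K Prod.fst)).comap (outputMarginal K (P × I) O)

variable {I O}

theorem mem_causalExtension_iff (i₀ : I) {W : Submodule K (P → K)} {d : (P × I) × O → K} :
    d ∈ causalExtension I O W ↔
      (∀ p i, ∑ o, d ((p, i), o) = ∑ o, d ((p, i₀), o)) ∧
        (fun p ↦ ∑ o, d ((p, i₀), o)) ∈ W := by
  constructor
  · rintro ⟨w, hw, hwd⟩
    have hsum (p : P) (i : I) : ∑ o, d ((p, i), o) = w p := by
      rw [← outputMarginal_apply, ← hwd, LinearMap.funLeft_apply]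
    simp only [hsum, implies_true, true_and]
    exact hw
  · rintro ⟨hconst, hmem⟩
    exact ⟨_, hmem, funext fun q ↦ (hconst q.1 q.2).symm⟩

theorem finrank_causalExtension [Fintype P] [Fintype I] [Nonempty I] [Nonempty O]
    (W : Submodule K (P → K)) :
    Module.finrank K (causalExtension I O W) =
      Module.finrank K W + Fintype.card P * Fintype.card I * (Fintype.card O - 1) := by
  have hinj : Function.Injective (LinearMap.funLeft K K (Prod.fst : P × I → P)) :=
    LinearMap.funLeft_injective_of_surjective K K _ Prod.fst_surjective
  rw [causalExtension, finrank_comap_of_surjective (outputMarginal_surjective O),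
    ← (Submodule.equivMapOfInjective _ hinj W).finrank_eq, finrank_ker_outputMarginal,
    Fintype.card_prod]

end Extension

section TotalOrder

variable (IA IB IC OA OB OC : Type*)

/-- The histories of three successive parties, read as the pair of the joint input and the joint
output; a `Unit` stands for the empty history. -/
def historyEquiv :
    (((((Unit × IA) × OA) × IB) × OB) × IC) × OC ≃ (IA × IB × IC) × (OA × OB × OC) where
  toFun h := ((h.1.1.1.1.1.2, h.1.1.1.2, h.1.2), (h.1.1.1.1.2, h.1.1.2, h.2))
  invFun x := (((((((), x.1.1), x.2.1), x.1.2.1), x.2.2.1), x.1.2.2), x.2.2.2)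

/-- `historyEquiv` on families of real numbers. -/
noncomputable def historyFunEquiv :
    ((((((Unit × IA) × OA) × IB) × OB) × IC) × OC → ℝ) ≃ₗ[ℝ]
      (IA × IB × IC → OA × OB × OC → ℝ) :=
  LinearEquiv.funCongrLeft ℝ ℝ (historyEquiv IA IB IC OA OB OC).symm ≪≫ₗ
    LinearEquiv.curry ℝ ℝ _ _

variable [Fintype OA] [Fintype OB] [Fintype OC]

/-- The causaltope of the total order `A ≺ B ≺ C` for arbitrary input types `IA`, `IB`, `IC` and
finite output types `OA`, `OB`, `OC`. -/
def totalOrderCausaltope : Set (IA × IB × IC → OA × OB × OC → ℝ) :=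
  {p | (∀ i o, 0 ≤ p i o) ∧ (∀ i, ∑ o, p i o = 1) ∧
    (∀ a b c b' c' oA,
      ∑ oB, ∑ oC, p (a, b, c) (oA, oB, oC) = ∑ oB, ∑ oC, p (a, b', c') (oA, oB, oC)) ∧
    (∀ a b c c' oA oB,
      ∑ oC, p (a, b, c) (oA, oB, oC) = ∑ oC, p (a, b, c') (oA, oB, oC))}

/-- The direction of the affine span of `totalOrderCausaltope`, built by letting the parties act
one after the other. The zero submodule at the start makes the total mass vanish. -/
noncomputable def totalOrderDirection : Submodule ℝ (IA × IB × IC → OA × OB × OC → ℝ) :=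
  (causalExtension IC OC (causalExtension IB OB
    (causalExtension IA OA (⊥ : Submodule ℝ (Unit → ℝ))))).map
      (historyFunEquiv IA IB IC OA OB OC).toLinearMap

/-- The model in which all joint outputs are equally likely, whatever the inputs. -/
noncomputable def uniformModel : IA × IB × IC → OA × OB × OC → ℝ :=
  fun _ _ ↦ (Fintype.card (OA × OB × OC) : ℝ)⁻¹

variable {IA IB IC OA OB OC}

theorem mem_totalOrderDirection_iff [Nonempty IA] [Nonempty IB] [Nonempty IC]
    {d : IA × IB × IC → OA × OB × OC → ℝ} :
    d ∈ totalOrderDirection IA IB IC OA OB OC ↔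
      (∀ i, ∑ o, d i o = 0) ∧
      (∀ a b c b' c' oA,
        ∑ oB, ∑ oC, d (a, b, c) (oA, oB, oC) = ∑ oB, ∑ oC, d (a, b', c') (oA, oB, oC)) ∧
      (∀ a b c c' oA oB,
        ∑ oC, d (a, b, c) (oA, oB, oC) = ∑ oC, d (a, b, c') (oA, oB, oC)) := by
  obtain ⟨a₀⟩ := ‹Nonempty IA›
  obtain ⟨b₀⟩ := ‹Nonempty IB›
  obtain ⟨c₀⟩ := ‹Nonempty IC›
  have hd (h) : (historyFunEquiv IA IB IC OA OB OC).symm d h =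
    d (historyEquiv _ _ _ _ _ _ h).1 (historyEquiv _ _ _ _ _ _ h).2 := rfl
  rw [totalOrderDirection, Submodule.mem_map_equiv, mem_causalExtension_iff c₀,
    mem_causalExtension_iff b₀, mem_causalExtension_iff a₀]
  simp only [hd, historyEquiv, Equiv.coe_fn_mk, Submodule.mem_bot, funext_iff, Pi.zero_apply,
    Prod.forall, Fintype.sum_prod_type, forall_const]
  constructor
  · rintro ⟨hC, hB, hA, h0⟩
    have hBC (a b c oA) :
        ∑ oB, ∑ oC, d (a, b, c) (oA, oB, oC) = ∑ oB, ∑ oC, d (a, b₀, c₀) (oA, oB, oC) :=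
      (Finset.sum_congr rfl fun oB _ ↦ hC a oA b oB c).trans (hB a oA b)
    refine ⟨fun a b c ↦ ?_, fun a b c b' c' oA ↦ ?_, fun a b c c' oA oB ↦ ?_⟩
    · simpa only [hBC, hA] using h0
    · rw [hBC, hBC a b' c']
    · rw [hC, hC a oA b oB c']
  · rintro ⟨h0, hB, hC⟩
    exact ⟨fun a oA b oB c ↦ hC a b c c₀ oA oB, fun a oA b ↦ hB a b c₀ b₀ c₀ oA,
      fun a ↦ (h0 a b₀ c₀).trans (h0 a₀ b₀ c₀).symm, h0 a₀ b₀ c₀⟩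

theorem finrank_totalOrderDirection [Fintype IA] [Fintype IB] [Fintype IC]
    [Nonempty IA] [Nonempty IB] [Nonempty IC] [Nonempty OA] [Nonempty OB] [Nonempty OC] :
    Module.finrank ℝ (totalOrderDirection IA IB IC OA OB OC) =
      Fintype.card IA * (Fintype.card OA - 1) +
      Fintype.card IA * Fintype.card OA * Fintype.card IB * (Fintype.card OB - 1) +
      Fintype.card IA * Fintype.card OA * Fintype.card IB * Fintype.card OB * Fintype.card IC *
        (Fintype.card OC - 1) := by
  rw [totalOrderDirection, LinearEquiv.finrank_map_eq]
  simp only [finrank_causalExtension, finrank_bot, Fintype.card_prod, Fintype.card_unit,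
    zero_add, one_mul]

theorem totalOrderCausaltope_eq_inter [Nonempty IA] [Nonempty IB] [Nonempty IC]
    [Nonempty OA] [Nonempty OB] [Nonempty OC] :
    totalOrderCausaltope IA IB IC OA OB OC =
      {p | ∀ i o, 0 ≤ p i o} ∩
        AffineSubspace.mk' (uniformModel IA IB IC OA OB OC)
          (totalOrderDirection IA IB IC OA OB OC) := by
  have huniform : (∑ _o : OA × OB × OC, (Fintype.card (OA × OB × OC) : ℝ)⁻¹) = 1 := by
    rw [Finset.sum_const, Finset.card_univ, nsmul_eq_mul, mul_inv_cancel₀]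
    exact Nat.cast_ne_zero.2 Fintype.card_ne_zero
  ext p
  simp only [totalOrderCausaltope, Set.mem_inter_iff, Set.mem_ofPred_eq, SetLike.mem_coe,
    AffineSubspace.mem_mk', mem_totalOrderDirection_iff, vsub_eq_sub, Pi.sub_apply, uniformModel,
    Finset.sum_sub_distrib, sub_left_inj, huniform, sub_eq_zero]

theorem nonneg_mem_nhds_uniformModel [Finite IA] [Finite IB] [Finite IC]
    [Nonempty OA] [Nonempty OB] [Nonempty OC] :
    {p | ∀ i o, 0 ≤ p i o} ∈ nhds (uniformModel IA IB IC OA OB OC) := by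
  have hpos : (0 : ℝ) < (Fintype.card (OA × OB × OC) : ℝ)⁻¹ :=
    inv_pos.2 (Nat.cast_pos.2 Fintype.card_pos)
  refine Filter.eventually_all.2 fun i ↦ Filter.eventually_all.2 fun o ↦ ?_
  have hcoord : Continuous fun p : IA × IB × IC → OA × OB × OC → ℝ ↦ p i o := by fun_prop
  exact hcoord.continuousAt.eventually (Ici_mem_nhds hpos)

theorem vectorSpan_totalOrderCausaltope [Finite IA] [Finite IB] [Finite IC]
    [Nonempty IA] [Nonempty IB] [Nonempty IC] [Nonempty OA] [Nonempty OB] [Nonempty OC] :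
    vectorSpan ℝ (totalOrderCausaltope IA IB IC OA OB OC) =
      totalOrderDirection IA IB IC OA OB OC := by
  rw [totalOrderCausaltope_eq_inter,
    vectorSpan_inter_of_mem_nhds (AffineSubspace.self_mem_mk' _ _) nonneg_mem_nhds_uniformModel,
    AffineSubspace.direction_mk']

theorem causaltopeABC_affineDim_general [Fintype IA] [Fintype IB] [Fintype IC]
    [Nonempty IA] [Nonempty IB] [Nonempty IC] [Nonempty OA] [Nonempty OB] [Nonempty OC] :
    Module.finrank ℝ (vectorSpan ℝ (totalOrderCausaltope IA IB IC OA OB OC)) =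
      Fintype.card IA * (Fintype.card OA - 1) +
      Fintype.card IA * Fintype.card OA * Fintype.card IB * (Fintype.card OB - 1) +
      Fintype.card IA * Fintype.card OA * Fintype.card IB * Fintype.card OB * Fintype.card IC *
        (Fintype.card OC - 1) := by
  rw [vectorSpan_totalOrderCausaltope, finrank_totalOrderDirection]

end TotalOrder

/-- The causaltope of the total causal order `A ≺ B ≺ C` on three parties
with binary inputs and binary outputs has affine dimension 42. -/
theorem causaltopeABC_affineDim :
    Module.finrank ℝ (vectorSpan ℝ causaltopeABC) = 42 :=
  causaltopeABC_affineDim_general (IA := Bool) (IB := Bool) (IC := Bool)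
    (OA := Bool) (OB := Bool) (OC := Bool)
end
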